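/- arXiv:2401.09649 — 2 statements merged into one kernel-verified Lean document; each statement's English description precedes it below -/
import Mathlib

section
/- cov(ℰ) ≤ 𝔯_{1/2}^∞: the least cardinality of a family of sets in ℰ whose union is all of 2^ℕ is at most the least cardinality of a cofinally 1/2-reaping family of infinite subsets of ℕ. -/
open MeasureTheory Filter Set

/-- `cnt X n` is the number of elements of `X` below `n`, i.e. `|X ∩ {0,…,n−1}|`. -/
noncomputable def cnt (X : Set ℕ) (n : ℕ) : ℕ := Nat.card ↥(X ∩ Set.Iio n)

/-- `S` cofinally bisects `X`: for infinitely many `n`,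
`|S ∩ X ∩ {0,…,n−1}| / |X ∩ {0,…,n−1}| = 1/2`. -/
def CofBisects (S X : Set ℕ) : Prop :=
  {n : ℕ | (cnt (S ∩ X) n : ℝ) / (cnt X n : ℝ) = 1 / 2}.Infinite

/-- `μ` is the uniform (1/2,1/2) product probability measure on Cantor space. -/
def IsCantorMeasure (μ : Measure (ℕ → Bool)) : Prop :=
  ∀ s : Finset ℕ, ∀ g : ℕ → Bool,
    μ {Y : ℕ → Bool | ∀ i ∈ s, Y i = g i} = (1 / 2 : ENNReal) ^ s.card

/-- Membership in the σ-ideal `ℰ` generated by closed measure-zero subsets of `2^ℕ`. -/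
def MemE (μ : Measure (ℕ → Bool)) (A : Set (ℕ → Bool)) : Prop :=
  ∃ F : ℕ → Set (ℕ → Bool), (∀ n, IsClosed (F n) ∧ μ (F n) = 0) ∧ A ⊆ ⋃ n, F n

/-- `cov(ℰ)`: the least cardinality of a family of sets in `ℰ` covering `2^ℕ`. -/
noncomputable def covE (μ : Measure (ℕ → Bool)) : Cardinal :=
  sInf {c : Cardinal | ∃ 𝒜 : Set (Set (ℕ → Bool)), (∀ A ∈ 𝒜, MemE μ A) ∧
    ⋃₀ 𝒜 = Set.univ ∧ c = Cardinal.mk 𝒜}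

/-- `𝔯_{1/2}^∞`: the least cardinality of a cofinally 1/2-reaping family, i.e. a family
`ℛ` of infinite subsets of `ℕ` such that no single infinite `X ⊆ ℕ` cofinally
bisects every member of `ℛ`. -/
noncomputable def rHalfInf : Cardinal :=
  sInf {c : Cardinal | ∃ ℛ : Set (Set ℕ), (∀ R ∈ ℛ, R.Infinite) ∧
    (¬ ∃ X : Set ℕ, X.Infinite ∧ ∀ R ∈ ℛ, CofBisects X R) ∧ c = Cardinal.mk ℛ}

/-!
Given a reaping family `ℛ`, the sets `{Y | Y does not cofinally bisect R}`, `R ∈ ℛ`, cover `2^ℕ`,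
so it suffices that each of them is in `ℰ`. Let a walk on `ℤ` ignore the tosses `Y i` with `i ∉ R`
and step up or down according to `Y i` for `i ∈ R`. It sits at `0` at time `n` exactly when `Y`
bisects `R` below `n`, so the exceptional set is the union over `N` of the closed sets on which the
walk avoids `0` from time `N` on. These are null: a walk that eventually avoids `0` is bounded on
one side, a martingale with bounded increments almost surely converges when it is bounded on one
side, and an integer walk that keeps moving does not converge.
-/

open ProbabilityTheory
open scoped Topology

section IntegerSequences

variable {s : ℕ → ℤ}

lemma eventually_pos_or_eventually_neg_of_abs_sub_le_one
    (hstep : ∀ n, |s (n + 1) - s n| ≤ 1) (hne : ∀ᶠ n in atTop, s n ≠ 0) :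
    (∀ᶠ n in atTop, 0 < s n) ∨ ∀ᶠ n in atTop, s n < 0 := by
  obtain ⟨N, hN⟩ := eventually_atTop.1 hne
  have persists : ∀ n ≥ N, (0 < s n → 0 < s (n + 1)) ∧ (s n < 0 → s (n + 1) < 0) := fun n hn => by
    have := abs_le.1 (hstep n)
    have := hN (n + 1) (by omega)
    omega
  rcases (hN N le_rfl).lt_or_gt with hneg | hpos
  · exact .inr <| eventually_atTop.2 ⟨N, fun n hn =>
      Nat.le_induction hneg (fun k hk => (persists k hk).2) n hn⟩
  · exact .inl <| eventually_atTop.2 ⟨N, fun n hn =>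
      Nat.le_induction hpos (fun k hk => (persists k hk).1) n hn⟩

lemma not_tendsto_intCast_of_frequently_succ_ne (hmove : ∃ᶠ n in atTop, s (n + 1) ≠ s n) (c : ℝ) :
    ¬ Tendsto (fun n => (s n : ℝ)) atTop (𝓝 c) := by
  intro hs
  have hdiff : Tendsto (fun n => ((s (n + 1) - s n : ℤ) : ℝ)) atTop (𝓝 0) := by
    simpa using (hs.comp (tendsto_add_atTop_nat 1)).sub hs
  refine hmove ((hdiff.abs.eventually_lt_const (by simp : |(0 : ℝ)| < 1)).mono fun n hn => ?_)
  rw [not_not, ← sub_eq_zero, ← Int.abs_lt_one_iff]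
  exact_mod_cast hn

end IntegerSequences

section Martingales

variable {Ω : Type*} {m0 : MeasurableSpace Ω} {μ : Measure Ω}

-- The sums run up to and including `X n`, which the `n`-th natural σ-algebra already sees.
lemma martingale_sum_range_succ_of_iIndepFun {E : Type*} [NormedAddCommGroup E] [NormedSpace ℝ E]
    [CompleteSpace E] [SecondCountableTopology E] [MeasurableSpace E] [BorelSpace E]
    {X : ℕ → Ω → E} (hX : ∀ i, StronglyMeasurable (X i)) (hint : ∀ i, Integrable (X i) μ)
    (hindep : iIndepFun X μ) (hmean : ∀ i, μ[X i] = 0) :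
    Martingale (fun n => ∑ i ∈ Finset.range (n + 1), X i) (Filtration.natural X hX) μ := by
  have := hindep.isProbabilityMeasure
  refine martingale_of_condExp_sub_eq_zero_nat (fun n => ?_)
    (fun n => integrable_finsetSum' _ fun i _ => hint i) fun n => ?_
  · exact Finset.stronglyMeasurable_sum _ fun i hi =>
      (Filtration.stronglyAdapted_natural hX i).mono
        ((Filtration.natural X hX).mono (Nat.lt_succ_iff.1 (Finset.mem_range.1 hi)))
  · simp only [Finset.sum_range_succ _ (n + 1), add_sub_cancel_left]
    filter_upwards [hindep.condExp_natural_ae_eq_of_lt hX n.lt_succ_self] with ω hω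
    rw [hω, hmean, Pi.zero_apply]

lemma ae_frequently_eq_zero_of_martingale [IsFiniteMeasure μ] {ℱ : Filtration ℕ m0}
    {S : ℕ → Ω → ℤ} (hS : Martingale (fun n ω => (S n ω : ℝ)) ℱ μ)
    (hstep : ∀ᵐ ω ∂μ, ∀ n, |S (n + 1) ω - S n ω| ≤ 1)
    (hmove : ∀ᵐ ω ∂μ, ∃ᶠ n in atTop, S (n + 1) ω ≠ S n ω) :
    ∀ᵐ ω ∂μ, ∃ᶠ n in atTop, S n ω = 0 := by
  have hstepReal : ∀ᵐ ω ∂μ, ∀ n, |(S (n + 1) ω : ℝ) - S n ω| ≤ (1 : NNReal) := by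
    filter_upwards [hstep] with ω hω n
    rw [NNReal.coe_one]
    exact_mod_cast hω n
  filter_upwards [hS.submartingale.bddAbove_iff_exists_tendsto hstepReal,
    hS.bddAbove_range_iff_bddBelow_range hstepReal, hstep, hmove]
    with ω hconv habove_iff_below hstepω hmoveω
  have not_bddAbove : ¬ BddAbove (range fun n => (S n ω : ℝ)) := fun hb =>
    let ⟨c, hc⟩ := hconv.1 hb
    not_tendsto_intCast_of_frequently_succ_ne hmoveω c hc
  by_contra hzero
  rcases eventually_pos_or_eventually_neg_of_abs_sub_le_one hstepω (not_frequently.1 hzero)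
    with hpos | hneg
  · refine not_bddAbove (habove_iff_below.2 (IsBoundedUnder.bddBelow_range ⟨0, ?_⟩))
    exact eventually_map.2 (hpos.mono fun n hn => Int.cast_nonneg hn.le)
  · refine not_bddAbove (IsBoundedUnder.bddAbove_range ⟨0, ?_⟩)
    exact eventually_map.2 (hneg.mono fun n hn => Int.cast_nonpos.2 hn.le)

lemma ae_frequently_sum_range_eq_zero {X : ℕ → Ω → ℤ} (hX : ∀ i, Measurable (X i))
    (hindep : iIndepFun X μ) (hstep : ∀ᵐ ω ∂μ, ∀ i, |X i ω| ≤ 1)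
    (hmean : ∀ i, ∫ ω, (X i ω : ℝ) ∂μ = 0) (hmove : ∀ᵐ ω ∂μ, ∃ᶠ i in atTop, X i ω ≠ 0) :
    ∀ᵐ ω ∂μ, ∃ᶠ n in atTop, ∑ i ∈ Finset.range n, X i ω = 0 := by
  have := hindep.isProbabilityMeasure
  have hXReal : ∀ i, StronglyMeasurable fun ω => (X i ω : ℝ) := fun i =>
    (measurable_from_top.comp (hX i)).stronglyMeasurable
  have hint : ∀ i, Integrable (fun ω => (X i ω : ℝ)) μ := fun i =>
    .of_bound (hXReal i).aestronglyMeasurable 1 <| hstep.mono fun ω hω => by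
      rw [Real.norm_eq_abs]
      exact_mod_cast hω i
  have hmart := martingale_sum_range_succ_of_iIndepFun hXReal hint
    (hindep.comp (fun _ x => (x : ℝ)) fun _ => measurable_from_top) hmean
  have hreturn : ∀ᵐ ω ∂μ, ∃ᶠ n in atTop, ∑ i ∈ Finset.range (n + 1), X i ω = 0 := by
    refine ae_frequently_eq_zero_of_martingale (by simpa [Finset.sum_fn] using hmart) ?_ ?_
    · filter_upwards [hstep] with ω hω n
      simpa [Finset.sum_range_succ _ (n + 1)] using hω (n + 1)
    · filter_upwards [hmove] with ω hω
      rw [← map_add_atTop_eq_nat 1, frequently_map] at hω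
      simpa [Finset.sum_range_succ _ (_ + 1)] using hω
  filter_upwards [hreturn] with ω hω using (tendsto_add_atTop_nat 1).frequently hω

end Martingales

namespace IsCantorMeasure

variable {μ : Measure (ℕ → Bool)}

lemma eq_infinitePi (hμ : IsCantorMeasure μ) :
    μ = Measure.infinitePi fun _ : ℕ => uniformOn (univ : Set Bool) := by
  refine IsProjectiveLimit.unique (fun s => Measure.ext_of_singleton fun g => ?_)
    (Measure.isProjectiveLimit_infinitePi _)
  have hcyl : s.restrict (π := fun _ => Bool) ⁻¹' {g} =
      {Y : ℕ → Bool | ∀ i ∈ s, Y i = if h : i ∈ s then g ⟨i, h⟩ else false} := by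
    ext Y
    simp +contextual [funext_iff]
  rw [Measure.map_apply (by fun_prop) (measurableSet_singleton g), hcyl, hμ, Measure.pi_singleton]
  simp only [uniformOn_univ, Measure.count_singleton, Fintype.card_bool, Nat.cast_ofNat,
    Finset.prod_const, Finset.card_univ, Fintype.card_coe]

lemma iIndepFun_eval (hμ : IsCantorMeasure μ) : iIndepFun (fun i (Y : ℕ → Bool) => Y i) μ := by
  rw [hμ.eq_infinitePi]
  exact iIndepFun_infinitePi (X := fun _ b => b) fun _ => measurable_id

lemma integral_comp_eval (hμ : IsCantorMeasure μ) (f : Bool → ℝ) (i : ℕ) :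
    ∫ Y, f (Y i) ∂μ = (f true + f false) / 2 := by
  rw [← integral_map (φ := Function.eval i) (measurable_pi_apply i).aemeasurable
      (measurable_of_finite f).aestronglyMeasurable, hμ.eq_infinitePi,
    (measurePreserving_eval_infinitePi _ i).map_eq, integral_fintype .of_finite, Fintype.sum_bool]
  simp only [measureReal_def, uniformOn_univ, Measure.count_singleton, Fintype.card_bool,
    Nat.cast_ofNat, ENNReal.toReal_div, ENNReal.toReal_one, ENNReal.toReal_ofNat, smul_eq_mul]
  ring

end IsCantorMeasure

lemma memE_setOf_not_frequently_mem {μ : Measure (ℕ → Bool)} {U : ℕ → Set (ℕ → Bool)}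
    (hU : ∀ n, IsOpen (U n)) (hfreq : ∀ᵐ Y ∂μ, ∃ᶠ n in atTop, Y ∈ U n) :
    MemE μ {Y | ¬ ∃ᶠ n in atTop, Y ∈ U n} := by
  refine ⟨fun N => ⋂ n ≥ N, (U n)ᶜ, fun N => ⟨?_, ?_⟩, fun Y hY => ?_⟩
  · exact isClosed_biInter fun n _ => (hU n).isClosed_compl
  · refine measure_mono_null (fun Y hY => ?_) hfreq
    exact not_frequently.2 (eventually_atTop.2 ⟨N, mem_iInter₂.1 hY⟩)
  · obtain ⟨N, hN⟩ := eventually_atTop.1 (not_frequently.1 hY)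
    exact mem_iUnion.2 ⟨N, mem_iInter₂.2 hN⟩

section Counting

lemma cnt_eq_count (X : Set ℕ) [DecidablePred (· ∈ X)] (n : ℕ) : cnt X n = Nat.count (· ∈ X) n := by
  rw [cnt, Nat.card_coe_set_eq, Nat.count_eq_card_filter_range, ← Set.ncard_coe_finset]
  congr 1
  ext i
  simp [and_comm]

lemma intCast_cnt_eq_sum_indicator (X : Set ℕ) (n : ℕ) :
    (cnt X n : ℤ) = ∑ i ∈ Finset.range n, X.indicator 1 i := by
  classical
  simp [cnt_eq_count, Nat.count_eq_card_filter_range, Set.indicator_apply, Finset.sum_boole]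

lemma tendsto_cnt_atTop {X : Set ℕ} (hX : X.Infinite) : Tendsto (cnt X) atTop atTop := by
  classical
  rw [funext (cnt_eq_count X)]
  refine tendsto_atTop_atTop_of_monotone (Nat.count_monotone _) fun k => ?_
  obtain ⟨n, hn⟩ := Nat.surjective_count_of_infinite_setOfPred (p := (· ∈ X)) hX k
  exact ⟨n, hn.ge⟩

variable {S R : Set ℕ}

lemma cofBisects_iff_frequently (hR : R.Infinite) :
    CofBisects S R ↔ ∃ᶠ n in atTop, 2 * cnt (S ∩ R) n = cnt R n := by
  rw [CofBisects, ← Nat.frequently_atTop_iff_infinite]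
  refine frequently_congr (((tendsto_cnt_atTop hR).eventually_gt_atTop 0).mono fun n hn => ?_)
  rw [div_eq_div_iff (by positivity) two_ne_zero, one_mul, mul_comm]
  norm_cast

lemma CofBisects.infinite (hR : R.Infinite) (h : CofBisects S R) : S.Infinite := by
  intro hS
  refine (cofBisects_iff_frequently hR).1 h
    (((tendsto_cnt_atTop hR).eventually_gt_atTop (2 * Nat.card S)).mono fun n hn => ?_)
  have : cnt (S ∩ R) n ≤ Nat.card S := Nat.card_mono hS fun i hi => hi.1.1
  omega

lemma not_cofBisects_self (X : Set ℕ) : ¬ CofBisects X X := by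
  intro h
  obtain ⟨n, hn⟩ := h.nonempty
  rw [mem_ofPred_eq, inter_self] at hn
  rcases eq_or_ne (cnt X n : ℝ) 0 with h0 | h0
  · norm_num [h0] at hn
  · norm_num [div_self h0] at hn

end Counting

/-- The contribution of position `i` to the walk along `R` driven by coin tosses: a toss `b` moves
the walk one step up or down when `i ∈ R`, and is ignored otherwise. -/
noncomputable def signStep (R : Set ℕ) (i : ℕ) (b : Bool) : ℤ :=
  R.indicator (fun _ => if b then 1 else -1) i

/-- The position after the tosses `Y 0, …, Y (n - 1)` of the walk on `ℤ` with steps `signStep`. -/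
noncomputable def walk (R : Set ℕ) (n : ℕ) (Y : ℕ → Bool) : ℤ :=
  ∑ i ∈ Finset.range n, signStep R i (Y i)

section Walk

variable (R : Set ℕ)

lemma abs_signStep_le_one (i : ℕ) (b : Bool) : |signStep R i b| ≤ 1 := by
  by_cases hi : i ∈ R <;> cases b <;> simp [signStep, hi]

lemma walk_eq_two_mul_cnt_sub_cnt (n : ℕ) (Y : ℕ → Bool) :
    walk R n Y = 2 * cnt ({i | Y i = true} ∩ R) n - cnt R n := by
  rw [intCast_cnt_eq_sum_indicator, intCast_cnt_eq_sum_indicator, Finset.mul_sum,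
    ← Finset.sum_sub_distrib]
  refine Finset.sum_congr rfl fun i _ => ?_
  by_cases hi : i ∈ R <;> cases hY : Y i <;> simp [signStep, hi, hY]

lemma continuous_walk (n : ℕ) : Continuous (walk R n) :=
  continuous_finsetSum _ fun i _ =>
    (continuous_of_discreteTopology (f := signStep R i)).comp (continuous_apply i)

variable {R} {μ : Measure (ℕ → Bool)}

lemma signStep_ne_zero_iff {i : ℕ} {b : Bool} : signStep R i b ≠ 0 ↔ i ∈ R := by
  cases b <;> simp [signStep]

lemma ae_frequently_walk_eq_zero (hμ : IsCantorMeasure μ) (hR : R.Infinite) :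
    ∀ᵐ Y ∂μ, ∃ᶠ n in atTop, walk R n Y = 0 := by
  refine ae_frequently_sum_range_eq_zero
    (fun i => (measurable_of_finite (signStep R i)).comp (measurable_pi_apply i))
    (hμ.iIndepFun_eval.comp (signStep R) fun i => measurable_of_finite _)
    (ae_of_all _ fun Y i => abs_signStep_le_one R i (Y i)) (fun i => ?_) (ae_of_all _ fun Y => ?_)
  · rw [hμ.integral_comp_eval fun b => (signStep R i b : ℝ)]
    by_cases hi : i ∈ R <;> simp [signStep, hi]
  · exact (Nat.frequently_atTop_iff_infinite.2 hR).mono fun i hi => signStep_ne_zero_iff.2 hi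

lemma memE_setOf_not_cofBisects (hμ : IsCantorMeasure μ) (hR : R.Infinite) :
    MemE μ {Y | ¬ CofBisects {i | Y i = true} R} := by
  have bisects_iff (Y : ℕ → Bool) :
      CofBisects {i | Y i = true} R ↔ ∃ᶠ n in atTop, Y ∈ walk R n ⁻¹' {0} := by
    rw [cofBisects_iff_frequently hR]
    refine frequently_congr (.of_forall fun n => ?_)
    rw [mem_preimage, mem_singleton_iff, walk_eq_two_mul_cnt_sub_cnt]
    omega
  simp only [bisects_iff]
  exact memE_setOf_not_frequently_mem
    (fun n => (isOpen_discrete {0}).preimage (continuous_walk R n))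
    (ae_frequently_walk_eq_zero hμ hR)

end Walk

lemma exists_not_cofBisects_of_reaping {ℛ : Set (Set ℕ)} (hinf : ∀ R ∈ ℛ, R.Infinite)
    (hreap : ¬ ∃ X : Set ℕ, X.Infinite ∧ ∀ R ∈ ℛ, CofBisects X R) (X : Set ℕ) :
    ∃ R ∈ ℛ, ¬ CofBisects X R := by
  by_contra! hX
  rcases ℛ.eq_empty_or_nonempty with rfl | ⟨R, hR⟩
  · exact hreap ⟨univ, infinite_univ, by simp⟩
  · exact hreap ⟨X, (hX R hR).infinite (hinf R hR), hX⟩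

/-- `cov(ℰ) ≤ 𝔯_{1/2}^∞`. -/
theorem covE_le_rHalfInf (μ : Measure (ℕ → Bool)) (hμ : IsCantorMeasure μ) :
    covE μ ≤ rHalfInf := by
  refine le_csInf ⟨_, {R | R.Infinite}, fun R hR => hR, ?_, rfl⟩ ?_
  -- Reaping families exist, so `rHalfInf` is not the junk value `sInf ∅ = 0`.
  · rintro ⟨X, hX, hbisects⟩
    exact not_cofBisects_self X (hbisects X hX)
  rintro _ ⟨ℛ, hinf, hreap, rfl⟩
  let notBisectors (R : Set ℕ) : Set (ℕ → Bool) := {Y | ¬ CofBisects {i | Y i = true} R}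
  have hmem : ∀ A ∈ notBisectors '' ℛ, MemE μ A :=
    forall_mem_image.2 fun R hR => memE_setOf_not_cofBisects hμ (hinf R hR)
  have hcover : ⋃₀ (notBisectors '' ℛ) = univ := eq_univ_of_forall fun Y => by
    obtain ⟨R, hR, hYR⟩ := exists_not_cofBisects_of_reaping hinf hreap {i | Y i = true}
    exact ⟨notBisectors R, mem_image_of_mem _ hR, hYR⟩
  exact (csInf_le' ⟨_, hmem, hcover, rfl⟩ : covE μ ≤ _).trans Cardinal.mk_image_le
end

section
/- Let R, S ⊆ ℕ, let 0 < ε < 1, and let m ≤ l be natural numbers (with m ≥ 1) such that ε < |R ∩ {0,…,m−1}|/m < 1 − ε, ε < |S ∩ {0,…,m−1}|/m < 1 − ε, and ε < |S ∩ {0,…,l−1}|/l < 1 − ε. Then ε²/2 < |(R ∩ {0,…,m−1}) ∪ (S ∩ [m,l))| / l < 1 − ε²/2, where [m,l) = {m, m+1, …, l−1}. -/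
open Set

/-!
Write `X` for the set that follows `R` below `m` and `S` from `m` on. If the density of `R` below
`m` exceeds `α` and that of `S` below `l` is at least `β`, then the density of `X` below `l`
exceeds `α * β`: passing from `S` to `X` loses at most the `m - |R ∩ m|` numbers below `m` outside
`R`, so `β l ≤ |S ∩ l| ≤ (|X ∩ l| - |R ∩ m|) + m`; multiplying by `α ≤ 1` and using
`α m < |R ∩ m| ≤ |X ∩ l|` gives `α β l < |X ∩ l|`. The upper bound is the lower bound for the
complements, because `Xᶜ` is built from `Rᶜ` and `Sᶜ` in the way `X` is built from `R` and `S`.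
-/

theorem compl_set_ite {ι : Type*} (t s s' : Set ι) : (t.ite s s')ᶜ = t.ite sᶜ s'ᶜ := by
  ext x
  by_cases hx : x ∈ t <;> simp [Set.ite, hx]

theorem ite_Iio_inter_Iio {ι : Type*} [LinearOrder ι] (R S : Set ι) {m l : ι} (hml : m ≤ l) :
    (Iio m).ite R S ∩ Iio l = (R ∩ Iio m) ∪ (S ∩ Ico m l) := by
  rw [Set.ite, union_inter_distrib_right, inter_assoc, Iio_inter_Iio, min_eq_left hml, sdiff_eq,
    compl_Iio, inter_assoc, Ici_inter_Iio]

theorem ite_Iio_inter_Ico {ι : Type*} [LinearOrder ι] (R S : Set ι) (m l : ι) :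
    (Iio m).ite R S ∩ Ico m l = S ∩ Ico m l := by
  rw [← Ici_inter_Iio, ← compl_Iio, ← inter_assoc, ite_inter_compl_self, inter_assoc]

theorem cnt_eq_ncard (X : Set ℕ) (n : ℕ) : cnt X n = (X ∩ Iio n).ncard :=
  Nat.card_coe_set_eq _

theorem cnt_add_cnt_compl (X : Set ℕ) (n : ℕ) : cnt X n + cnt Xᶜ n = n := by
  rw [cnt_eq_ncard, cnt_eq_ncard, inter_comm, inter_comm Xᶜ, ← sdiff_eq,
    ncard_inter_add_ncard_sdiff_eq_ncard _ _ (finite_Iio n), ncard_Iio_nat]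

theorem cnt_le (X : Set ℕ) (n : ℕ) : cnt X n ≤ n :=
  Nat.le.intro (cnt_add_cnt_compl X n)

theorem cnt_compl_div (X : Set ℕ) {n : ℕ} (hn : n ≠ 0) :
    (cnt Xᶜ n : ℝ) / n = 1 - (cnt X n : ℝ) / n := by
  have hn' : (n : ℝ) ≠ 0 := Nat.cast_ne_zero.mpr hn
  have hsum : (cnt X n : ℝ) + cnt Xᶜ n = n := mod_cast cnt_add_cnt_compl X n
  rw [eq_sub_iff_add_eq', ← add_div, hsum, div_self hn']

theorem cnt_add_ncard_inter_Ico (X : Set ℕ) {m l : ℕ} (hml : m ≤ l) :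
    cnt X m + (X ∩ Ico m l).ncard = cnt X l := by
  have hdisj : Disjoint (X ∩ Iio m) (X ∩ Ico m l) :=
    ((Iio_disjoint_Ici le_rfl).mono_right Ico_subset_Ici_self).mono inter_subset_right
      inter_subset_right
  rw [cnt_eq_ncard, cnt_eq_ncard, ← Iio_union_Ico_eq_Iio hml, inter_union_distrib_left,
    ncard_union_eq hdisj ((finite_Iio m).inter_of_right X) ((finite_Ico m l).inter_of_right X)]

section Splice

variable (R S : Set ℕ) {m l : ℕ}

theorem cnt_ite_Iio (hml : m ≤ l) :
    cnt ((Iio m).ite R S) l = cnt R m + (S ∩ Ico m l).ncard := by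
  rw [← cnt_add_ncard_inter_Ico _ hml, ite_Iio_inter_Ico, cnt_eq_ncard, ite_inter_self,
    ← cnt_eq_ncard]

theorem cnt_le_cnt_ite_Iio (hml : m ≤ l) : cnt R m ≤ cnt ((Iio m).ite R S) l :=
  Nat.le.intro (cnt_ite_Iio R S hml).symm

theorem cnt_add_cnt_le_cnt_ite_Iio_add (hml : m ≤ l) :
    cnt R m + cnt S l ≤ cnt ((Iio m).ite R S) l + m := by
  have hSm : cnt S m ≤ m := cnt_le S m
  have hSl : cnt S m + (S ∩ Ico m l).ncard = cnt S l := cnt_add_ncard_inter_Ico S hml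
  have hX := cnt_ite_Iio R S hml
  omega

variable {R S} {α β : ℝ}

theorem mul_lt_cnt_ite_Iio_div (hα : 0 ≤ α) (hm : 0 < m) (hml : m ≤ l)
    (hR : α < (cnt R m : ℝ) / m) (hS : β ≤ (cnt S l : ℝ) / l) :
    α * β < (cnt ((Iio m).ite R S) l : ℝ) / l := by
  have hl : (0 : ℝ) < l := Nat.cast_pos.mpr (hm.trans_le hml)
  have hα1 : α ≤ 1 :=
    hR.le.trans (div_le_one_of_le₀ (Nat.cast_le.mpr (cnt_le R m)) m.cast_nonneg)
  rw [lt_div_iff₀ (Nat.cast_pos.mpr hm)] at hR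
  rw [le_div_iff₀ hl] at hS
  rw [lt_div_iff₀ hl]
  set X := (Iio m).ite R S
  have hRX : (cnt R m : ℝ) ≤ cnt X l := mod_cast cnt_le_cnt_ite_Iio R S hml
  have hSX : (cnt R m : ℝ) + cnt S l ≤ cnt X l + m :=
    mod_cast cnt_add_cnt_le_cnt_ite_Iio_add R S hml
  calc α * β * l = α * (β * l) := mul_assoc α β l
    _ ≤ α * ((cnt X l - cnt R m) + m) := by gcongr; linarith
    _ = α * (cnt X l - cnt R m) + α * m := mul_add _ _ _
    _ < (cnt X l - cnt R m) + cnt R m :=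
      add_lt_add_of_le_of_lt (mul_le_of_le_one_left (sub_nonneg.mpr hRX) hα1) hR
    _ = cnt X l := sub_add_cancel _ _

theorem cnt_ite_Iio_div_lt_one_sub_mul (hα : 0 ≤ α) (hm : 0 < m) (hml : m ≤ l)
    (hR : (cnt R m : ℝ) / m < 1 - α) (hS : (cnt S l : ℝ) / l ≤ 1 - β) :
    (cnt ((Iio m).ite R S) l : ℝ) / l < 1 - α * β := by
  have hl : l ≠ 0 := (hm.trans_le hml).ne'
  have hRc : α < (cnt Rᶜ m : ℝ) / m := by rw [cnt_compl_div R hm.ne']; linarith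
  have hSc : β ≤ (cnt Sᶜ l : ℝ) / l := by rw [cnt_compl_div S hl]; linarith
  have hXc := mul_lt_cnt_ite_Iio_div hα hm hml hRc hSc
  rw [← compl_set_ite, cnt_compl_div _ hl] at hXc
  linarith

end Splice

theorem three_times_general (R S : Set ℕ) {α β : ℝ} (hα : 0 ≤ α) {m l : ℕ} (hm : 0 < m)
    (hml : m ≤ l) (hRm : α < (cnt R m : ℝ) / m ∧ (cnt R m : ℝ) / m < 1 - α)
    (hSl : β ≤ (cnt S l : ℝ) / l ∧ (cnt S l : ℝ) / l ≤ 1 - β) :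
    α * β < (Nat.card ↥((R ∩ Iio m) ∪ (S ∩ Ico m l)) : ℝ) / l ∧
    (Nat.card ↥((R ∩ Iio m) ∪ (S ∩ Ico m l)) : ℝ) / l < 1 - α * β := by
  rw [← ite_Iio_inter_Iio R S hml]
  exact ⟨mul_lt_cnt_ite_Iio_div hα hm hml hRm.1 hSl.1,
    cnt_ite_Iio_div_lt_one_sub_mul hα hm hml hRm.2 hSl.2⟩

/-- If `ε < |R ∩ m|/m < 1 − ε`, `ε < |S ∩ m|/m < 1 − ε` and `ε < |S ∩ l|/l < 1 − ε`
for `1 ≤ m ≤ l` and `0 < ε < 1`, then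
`ε²/2 < |(R ∩ m) ∪ (S ∩ [m,l))|/l < 1 − ε²/2`. -/
theorem three_times (R S : Set ℕ) (ε : ℝ) (hε0 : 0 < ε) (hε1 : ε < 1)
    (m l : ℕ) (hm : 1 ≤ m) (hml : m ≤ l)
    (hRm : ε < (cnt R m : ℝ) / m ∧ (cnt R m : ℝ) / m < 1 - ε)
    (hSm : ε < (cnt S m : ℝ) / m ∧ (cnt S m : ℝ) / m < 1 - ε)
    (hSl : ε < (cnt S l : ℝ) / l ∧ (cnt S l : ℝ) / l < 1 - ε) :
    ε ^ 2 / 2 < (Nat.card ↥((R ∩ Set.Iio m) ∪ (S ∩ Set.Ico m l)) : ℝ) / l ∧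
    (Nat.card ↥((R ∩ Set.Iio m) ∪ (S ∩ Set.Ico m l)) : ℝ) / l < 1 - ε ^ 2 / 2 := by
  have hε : ε ^ 2 / 2 ≤ ε * ε := (half_le_self (sq_nonneg ε)).trans_eq (sq ε)
  have hX := three_times_general R S hε0.le hm hml hRm ⟨hSl.1.le, hSl.2.le⟩
  exact ⟨hε.trans_lt hX.1, hX.2.trans_le (sub_le_sub_left hε 1)⟩
end
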